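/- Let K be a compact subset of a real Banach space X, γ ∈ (0,1], and δ ≥ 1 a constant such that every n-dimensional subspace Y of X admits a linear isomorphism T : Y → ℓ_2^n with ‖T‖·‖T^{−1}‖ ≤ δ. Then every sequence produced by the weak greedy algorithm with parameter γ satisfies σ_n(K) ≤ γ^{−1} δ (n! V_n)^{1/n} ε_n(co(K)). -/

import Mathlib

open scoped RealInnerProductSpace

/-- Dyadic entropy number: infimum of all `ε > 0` such that `K` is covered by `2^n`
balls of radius `ε`. -/
noncomputable def entropyNumber {X : Type*} [NormedAddCommGroup X] (n : ℕ) (K : Set X) : ℝ :=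
  sInf {ε : ℝ | 0 < ε ∧ ∃ c : Fin (2 ^ n) → X, K ⊆ ⋃ i, Metric.closedBall (c i) ε}

/-- Symmetric (absolutely) convex hull: closure of the set of finite sums `∑ cᵢ gᵢ`
with `gᵢ ∈ K` and `∑ |cᵢ| ≤ 1`. -/
noncomputable def symConvexHull {X : Type*} [NormedAddCommGroup X] [NormedSpace ℝ X]
    (K : Set X) : Set X :=
  closure {x : X | ∃ (m : ℕ) (c : Fin m → ℝ) (g : Fin m → X),
    (∀ i, g i ∈ K) ∧ (∑ i, |c i|) ≤ 1 ∧ x = ∑ i, c i • g i}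

/-- Volume of the unit Euclidean ball in `ℝⁿ`. -/
noncomputable def unitBallVol (n : ℕ) : ℝ :=
  Real.pi ^ ((n : ℝ) / 2) / Real.Gamma ((n : ℝ) / 2 + 1)

/-- Span of the first `n` terms of a sequence. -/
noncomputable def spanFirst {X : Type*} [NormedAddCommGroup X] [NormedSpace ℝ X]
    (f : ℕ → X) (n : ℕ) : Submodule ℝ X :=
  Submodule.span ℝ (f '' {i | i < n})

/-- The weak greedy algorithm with parameter `γ`: `f n` (the `(n+1)`-st iterate) lies in `K`
and its distance to the span of the previous iterates is at least `γ` times that of any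
other element of `K`. -/
def IsWeakGreedy {X : Type*} [NormedAddCommGroup X] [NormedSpace ℝ X]
    (γ : ℝ) (K : Set X) (f : ℕ → X) : Prop :=
  ∀ n : ℕ, f n ∈ K ∧ ∀ g ∈ K,
    γ * Metric.infDist g (spanFirst f n : Set X) ≤ Metric.infDist (f n) (spanFirst f n : Set X)

/-- The greedy error `σ_n(K) = sup_{f ∈ K} dist(f, span{f_1,…,f_n})`. -/
noncomputable def greedyError {X : Type*} [NormedAddCommGroup X] [NormedSpace ℝ X]
    (K : Set X) (f : ℕ → X) (n : ℕ) : ℝ :=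
  sSup ((fun g => Metric.infDist g (spanFirst f n : Set X)) '' K)

/-- Kolmogorov `n`-width. -/
noncomputable def kolmogorovWidth {X : Type*} [NormedAddCommGroup X] [NormedSpace ℝ X]
    (n : ℕ) (K : Set X) : ℝ :=
  sInf {d : ℝ | ∃ Y : Submodule ℝ X, FiniteDimensional ℝ Y ∧ Module.finrank ℝ Y ≤ n ∧
    d = sSup ((fun g => Metric.infDist g (Y : Set X)) '' K)}

/-- `f` admits an `ℓ¹` representation over the dictionary `D`. -/
def HasL1Rep {X : Type*} [NormedAddCommGroup X] [NormedSpace ℝ X] (D : Set X) (f : X) : Prop :=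
  ∃ (c : ℕ → ℝ) (g : ℕ → X), (∀ i, g i ∈ D) ∧ Summable (fun i => |c i|) ∧
    HasSum (fun i => c i • g i) f

/-- The variation norm `‖f‖_{L₁(D)}`. -/
noncomputable def varNorm {X : Type*} [NormedAddCommGroup X] [NormedSpace ℝ X]
    (D : Set X) (f : X) : ℝ :=
  sInf {t : ℝ | ∃ (c : ℕ → ℝ) (g : ℕ → X), (∀ i, g i ∈ D) ∧ Summable (fun i => |c i|) ∧
    HasSum (fun i => c i • g i) f ∧ t = ∑' i, |c i|}

/-- The orthogonal greedy algorithm with target `f`: `fa 0 = 0`; at each step `g n ∈ D`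
maximizes `|⟨g, f - fa n⟩|` over `D`, and `fa (n+1)` is the orthogonal projection of `f`
onto `span{g 0, …, g n}`. -/
def IsOGA {X : Type*} [NormedAddCommGroup X] [InnerProductSpace ℝ X]
    (D : Set X) (f : X) (g fa : ℕ → X) : Prop :=
  fa 0 = 0 ∧ ∀ n : ℕ,
    g n ∈ D ∧ (∀ h ∈ D, |⟪h, f - fa n⟫| ≤ |⟪g n, f - fa n⟫|) ∧
    fa (n + 1) ∈ Submodule.span ℝ (g '' {i | i ≤ n}) ∧
    ∀ w ∈ Submodule.span ℝ (g '' {i | i ≤ n}), ⟪f - fa (n + 1), w⟫ = 0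

/-- Best `n`-term approximation error `E_n(f, D)`. -/
noncomputable def bestNTermError {X : Type*} [NormedAddCommGroup X] [NormedSpace ℝ X]
    (D : Set X) (n : ℕ) (f : X) : ℝ :=
  sInf {r : ℝ | ∃ (c : Fin n → ℝ) (g : Fin n → X), (∀ i, g i ∈ D) ∧ r = ‖f - ∑ i, c i • g i‖}

/-- The K-functional `K(t, g)` between `X` and `L₁(D)`. -/
noncomputable def Kfunctional {X : Type*} [NormedAddCommGroup X] [NormedSpace ℝ X]
    (D : Set X) (t : ℝ) (gg : X) : ℝ :=
  sInf {s : ℝ | ∃ h : X, HasL1Rep D h ∧ s = ‖gg - h‖ + t * varNorm D h}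

/-- The interpolation norm `‖g‖_θ = sup_{t > 0} t^{-θ} K(t, g)`. -/
noncomputable def interpNorm {X : Type*} [NormedAddCommGroup X] [NormedSpace ℝ X]
    (D : Set X) (θ : ℝ) (gg : X) : ℝ :=
  sSup ((fun t => t ^ (-θ) * Kfunctional D t gg) '' Set.Ioi (0 : ℝ))

open MeasureTheory

/-- Steiner symmetrization of `A` in the `i`-th coordinate direction. -/
def steinerSymm {ι : Type*} [DecidableEq ι] (i : ι) (A : Set (ι → ℝ)) : Set (ι → ℝ) :=
  {x | ENNReal.ofReal (2 * |x i|) < volume {s : ℝ | Function.update x i s ∈ A}}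

section Steiner

variable {ι : Type*} [DecidableEq ι]

theorem volume_add_volume_le_of_abs_sub_le {S S' : Set ℝ} {r : ℝ} (hS : S.Nonempty)
    (hS' : S'.Nonempty) (h : ∀ a ∈ S, ∀ b ∈ S', |a - b| ≤ r) :
    volume S + volume S' ≤ ENNReal.ofReal (2 * r) := by
  obtain ⟨a₀, ha₀⟩ := hS
  obtain ⟨b₀, hb₀⟩ := hS'
  have hlS : BddBelow S := ⟨b₀ - r, fun a ha => by linarith [(abs_le.1 (h a ha b₀ hb₀)).1]⟩
  have huS : BddAbove S := ⟨b₀ + r, fun a ha => by linarith [(abs_le.1 (h a ha b₀ hb₀)).2]⟩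
  have hlS' : BddBelow S' := ⟨a₀ - r, fun b hb => by linarith [(abs_le.1 (h a₀ ha₀ b hb)).2]⟩
  have huS' : BddAbove S' := ⟨a₀ + r, fun b hb => by linarith [(abs_le.1 (h a₀ ha₀ b hb)).1]⟩
  have h₁ : volume S ≤ ENNReal.ofReal (sSup S - sInf S) := by
    rw [← Real.volume_Icc]
    exact measure_mono fun a ha => ⟨csInf_le hlS ha, le_csSup huS ha⟩
  have h₂ : volume S' ≤ ENNReal.ofReal (sSup S' - sInf S') := by
    rw [← Real.volume_Icc]
    exact measure_mono fun a ha => ⟨csInf_le hlS' ha, le_csSup huS' ha⟩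
  have h₃ : sSup S ≤ r + sInf S' := by
    refine csSup_le ⟨a₀, ha₀⟩ fun a ha => ?_
    have : a - r ≤ sInf S' := le_csInf ⟨b₀, hb₀⟩ fun b hb => by
      linarith [(abs_le.1 (h a ha b hb)).2]
    linarith
  have h₄ : sSup S' ≤ r + sInf S := by
    refine csSup_le ⟨b₀, hb₀⟩ fun b hb => ?_
    have : b - r ≤ sInf S := le_csInf ⟨a₀, ha₀⟩ fun a ha => by
      linarith [(abs_le.1 (h a ha b hb)).1]
    linarith
  have h₅ : sInf S ≤ sSup S := (csInf_le hlS ha₀).trans (le_csSup huS ha₀)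
  have h₆ : sInf S' ≤ sSup S' := (csInf_le hlS' hb₀).trans (le_csSup huS' hb₀)
  calc volume S + volume S'
      ≤ ENNReal.ofReal (sSup S - sInf S) + ENNReal.ofReal (sSup S' - sInf S') :=
        add_le_add h₁ h₂
    _ = ENNReal.ofReal ((sSup S - sInf S) + (sSup S' - sInf S')) :=
        (ENNReal.ofReal_add (by linarith) (by linarith)).symm
    _ ≤ _ := ENNReal.ofReal_le_ofReal (by linarith)

theorem volume_setOf_ofReal_two_mul_abs_lt (L : ENNReal) :
    volume {s : ℝ | ENNReal.ofReal (2 * |s|) < L} = L := by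
  induction L with
  | top => simp [ENNReal.mul_lt_top]
  | coe l =>
    have : {s : ℝ | ENNReal.ofReal (2 * |s|) < l} = Set.Ioo (-(l / 2 : ℝ)) (l / 2) := by
      ext s
      rw [Set.mem_ofPred_eq, ENNReal.ofReal_lt_coe_iff (by positivity), Set.mem_Ioo, ← abs_lt]
      constructor <;> intro h <;> linarith
    rw [this, Real.volume_Ioo]
    ring_nf
    simp

theorem lmarginal_singleton_indicator {A : Set (ι → ℝ)} (hA : MeasurableSet A) (i : ι)
    (x : ι → ℝ) :
    (∫⋯∫⁻_{i}, A.indicator 1 ∂fun _ => (volume : Measure ℝ)) x =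
      volume {s : ℝ | Function.update x i s ∈ A} := by
  rw [lmarginal_singleton]
  exact lintegral_indicator_one (measurable_update x hA)

theorem measurableSet_steinerSymm {A : Set (ι → ℝ)} (hA : MeasurableSet A) (i : ι) :
    MeasurableSet (steinerSymm i A) := by
  have h : Measurable fun x : ι → ℝ => volume {s : ℝ | Function.update x i s ∈ A} := by
    simp_rw [← lmarginal_singleton_indicator hA]
    exact (measurable_one.indicator hA).lmarginal _
  exact measurableSet_lt (by fun_prop) h

theorem volume_steinerSymm [Fintype ι] {A : Set (ι → ℝ)} (hA : MeasurableSet A) (i : ι) :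
    volume (steinerSymm i A) = volume A := by
  rw [← lintegral_indicator_one hA, ← lintegral_indicator_one (measurableSet_steinerSymm hA i)]
  refine lintegral_eq_of_lmarginal_eq {i} (measurable_one.indicator
    (measurableSet_steinerSymm hA i)) (measurable_one.indicator hA) ?_
  ext x
  rw [lmarginal_singleton_indicator hA,
    lmarginal_singleton_indicator (measurableSet_steinerSymm hA i)]
  simp only [steinerSymm, Set.mem_ofPred_eq, Function.update_self, Function.update_idem]
  exact volume_setOf_ofReal_two_mul_abs_lt _

theorem sum_sq_sub_le_of_mem_steinerSymm [Fintype ι] {A : Set (ι → ℝ)} {D : ℝ}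
    (hA : ∀ x ∈ A, ∀ y ∈ A, ∑ j, (x j - y j) ^ 2 ≤ D) (i : ι) :
    ∀ x ∈ steinerSymm i A, ∀ y ∈ steinerSymm i A, ∑ j, (x j - y j) ^ 2 ≤ D := by
  intro x hx y hy
  have nonempty_section : ∀ z ∈ steinerSymm i A, {s : ℝ | Function.update z i s ∈ A}.Nonempty :=
    fun z hz => nonempty_of_measure_ne_zero (ne_of_gt (lt_of_le_of_lt zero_le hz))
  set R := ∑ j ∈ Finset.univ.erase i, (x j - y j) ^ 2
  have hab : ∀ a ∈ {s : ℝ | Function.update x i s ∈ A}, ∀ b ∈ {s : ℝ | Function.update y i s ∈ A},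
      (a - b) ^ 2 ≤ D - R := by
    intro a ha b hb
    have h := hA _ ha _ hb
    rw [← Finset.add_sum_erase _ _ (Finset.mem_univ i)] at h
    simp only [Function.update_self] at h
    have : ∑ j ∈ Finset.univ.erase i,
        (Function.update x i a j - Function.update y i b j) ^ 2 = R := by
      refine Finset.sum_congr rfl fun j hj => ?_
      simp [Finset.ne_of_mem_erase hj]
    linarith
  have h := volume_add_volume_le_of_abs_sub_le (nonempty_section x hx) (nonempty_section y hy)
    (r := √(D - R)) fun a ha b hb => Real.abs_le_sqrt (hab a ha b hb)
  have hlt := (ENNReal.add_lt_add hx hy).trans_le h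
  rw [← ENNReal.ofReal_add (by positivity) (by positivity)] at hlt
  have hlt' := (ENNReal.ofReal_lt_ofReal_iff_of_nonneg (by positivity)).1 hlt
  have hsq : (x i - y i) ^ 2 ≤ D - R := by
    have hDR : 0 < √(D - R) := by linarith [abs_nonneg (x i), abs_nonneg (y i)]
    rw [← sq_abs, ← Real.sq_sqrt (Real.sqrt_pos.1 hDR).le]
    gcongr
    linarith [abs_sub (x i) (y i)]
  rw [← Finset.add_sum_erase _ _ (Finset.mem_univ i)]
  linarith

theorem update_neg_mem_steinerSymm_self {A : Set (ι → ℝ)} {i : ι} {x : ι → ℝ}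
    (hx : x ∈ steinerSymm i A) : Function.update x i (-x i) ∈ steinerSymm i A := by
  simpa [steinerSymm] using hx

theorem update_neg_mem_steinerSymm_of_ne {A : Set (ι → ℝ)} {i j : ι} (hij : j ≠ i)
    (hA : ∀ x ∈ A, Function.update x j (-x j) ∈ A) {x : ι → ℝ}
    (hx : x ∈ steinerSymm i A) : Function.update x j (-x j) ∈ steinerSymm i A := by
  simp only [steinerSymm, Set.mem_ofPred_eq, Function.update_of_ne hij.symm] at hx ⊢
  refine hx.trans_le (measure_mono fun s hs => ?_)
  have := hA _ hs
  rwa [Function.update_of_ne hij, Function.update_comm hij.symm] at this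

theorem exists_symmetric_volume_eq [Fintype ι] {A : Set (ι → ℝ)} (hA : MeasurableSet A) {D : ℝ}
    (hD : ∀ x ∈ A, ∀ y ∈ A, ∑ j, (x j - y j) ^ 2 ≤ D) (s : Finset ι) :
    ∃ B : Set (ι → ℝ), MeasurableSet B ∧ volume B = volume A ∧
      (∀ x ∈ B, ∀ y ∈ B, ∑ j, (x j - y j) ^ 2 ≤ D) ∧
      ∀ j ∈ s, ∀ x ∈ B, Function.update x j (-x j) ∈ B := by
  induction s using Finset.induction_on with
  | empty => exact ⟨A, hA, rfl, hD, by simp⟩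
  | insert i s hi ih =>
    obtain ⟨B, hB, hvol, hDB, hsymm⟩ := ih
    refine ⟨steinerSymm i B, measurableSet_steinerSymm hB i,
      (volume_steinerSymm hB i).trans hvol, sum_sq_sub_le_of_mem_steinerSymm hDB i, ?_⟩
    intro j hj x hx
    by_cases hji : j = i
    · subst hji
      exact update_neg_mem_steinerSymm_self hx
    · exact update_neg_mem_steinerSymm_of_ne hji
        (hsymm j ((Finset.mem_insert.1 hj).resolve_left hji)) hx

theorem neg_mem_of_forall_update_neg_mem [Fintype ι] {B : Set (ι → ℝ)}
    (hB : ∀ j, ∀ x ∈ B, Function.update x j (-x j) ∈ B) {x : ι → ℝ} (hx : x ∈ B) : -x ∈ B := by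
  have h : ∀ s : Finset ι, s.piecewise (-x) x ∈ B := by
    intro s
    induction s using Finset.induction_on with
    | empty => simpa using hx
    | insert i s hi ih =>
      have := hB i _ ih
      rwa [Finset.piecewise_eq_of_notMem _ _ _ hi, ← Pi.neg_apply,
        ← Finset.piecewise_insert] at this
  simpa using h Finset.univ

end Steiner

/-- Isodiametric inequality. -/
theorem EuclideanSpace.volume_le_volume_closedBall_of_dist_le {ι : Type*} [Fintype ι]
    {A : Set (EuclideanSpace ℝ ι)} (hA : MeasurableSet A) {r : ℝ} (hr : 0 ≤ r)
    (h : ∀ x ∈ A, ∀ y ∈ A, dist x y ≤ 2 * r) :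
    volume A ≤ volume (Metric.closedBall (0 : EuclideanSpace ℝ ι) r) := by
  classical
  have hpres := EuclideanSpace.volume_preserving_symm_measurableEquiv_toLp ι
  have hpres' := hpres.symm
  set e := MeasurableEquiv.toLp 2 (ι → ℝ)
  obtain ⟨B, hB, hvol, hDB, hsymm⟩ := exists_symmetric_volume_eq (A := e ⁻¹' A)
    (e.measurable hA) (D := (2 * r) ^ 2) (fun x hx y hy => by
      have := h _ hx _ hy
      rw [EuclideanSpace.dist_eq, Real.sqrt_le_left (by positivity)] at this
      simpa [Real.dist_eq, e] using this) Finset.univ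
  have hA' : volume (e ⁻¹' A) = volume A := hpres'.measure_preimage_equiv A
  have hball : volume (e ⁻¹' Metric.closedBall 0 r) =
      volume (Metric.closedBall (0 : EuclideanSpace ℝ ι) r) := hpres'.measure_preimage_equiv _
  rw [← hA', ← hvol, ← hball]
  refine measure_mono fun x hx => ?_
  have hneg := hDB x hx (-x)
    (neg_mem_of_forall_update_neg_mem (fun j => hsymm j (Finset.mem_univ j)) hx)
  rw [Set.mem_preimage, mem_closedBall_zero_iff, EuclideanSpace.norm_eq, Real.sqrt_le_left hr]
  have : ∑ j, (x j - (-x) j) ^ 2 = 4 * ∑ j, (x j) ^ 2 := by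
    rw [Finset.mul_sum]
    exact Finset.sum_congr rfl fun j _ => by simp; ring
  rw [this] at hneg
  simp only [Real.norm_eq_abs, sq_abs, e]
  change ∑ j, (x j) ^ 2 ≤ r ^ 2
  linarith

theorem InnerProductSpace.le_abs_inner_gramSchmidtOrthonormalBasis {ι E : Type*} [Fintype ι]
    [LinearOrder ι] [LocallyFiniteOrderBot ι] [WellFoundedLT ι]
    [NormedAddCommGroup E] [InnerProductSpace ℝ E] [FiniteDimensional ℝ E]
    (hdim : Module.finrank ℝ E = Fintype.card ι) (v : ι → E) {ρ : ℝ} (hρ : 0 < ρ) (i : ι)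
    (hv : ∀ w ∈ Submodule.span ℝ (v '' Set.Iio i), ρ ≤ ‖v i - w‖) :
    ρ ≤ |inner ℝ (gramSchmidtOrthonormalBasis hdim v i) (v i)| := by
  set w := v i - gramSchmidt ℝ v i with hw
  have hwmem : w ∈ Submodule.span ℝ (v '' Set.Iio i) := by
    rw [← span_gramSchmidt_Iio ℝ v i, hw, gramSchmidt_def, sub_sub_cancel]
    refine Submodule.sum_mem _ fun j hj => ?_
    have hle : (Submodule.span ℝ {gramSchmidt ℝ v j}) ≤
        Submodule.span ℝ (gramSchmidt ℝ v '' Set.Iio i) :=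
      Submodule.span_mono (Set.singleton_subset_iff.2 ⟨j, Finset.mem_Iio.1 hj, rfl⟩)
    exact hle (Submodule.starProjection_apply_mem _ _)
  have hnorm : ρ ≤ ‖gramSchmidt ℝ v i‖ := by simpa [hw] using hv w hwmem
  have hpos : 0 < ‖gramSchmidt ℝ v i‖ := hρ.trans_le hnorm
  have hne : gramSchmidtNormed ℝ v i ≠ 0 := by
    have := norm_pos_iff.1 hpos
    simp [gramSchmidtNormed, this]
  have horth : ∀ u ∈ Submodule.span ℝ (v '' Set.Iio i),
      inner ℝ (gramSchmidtOrthonormalBasis hdim v i) u = 0 := by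
    intro u hu
    induction hu using Submodule.span_induction with
    | mem x hx =>
      obtain ⟨j, hj, rfl⟩ := hx
      exact gramSchmidtOrthonormalBasis_inv_triangular hdim v hj
    | zero => simp
    | add x y _ _ hx hy => rw [inner_add_right, hx, hy, add_zero]
    | smul c x _ hx => rw [inner_smul_right, hx, mul_zero]
  have hsplit : v i = gramSchmidt ℝ v i + w := by simp [hw]
  rw [hsplit, inner_add_right, horth w hwmem, add_zero, gramSchmidtOrthonormalBasis_apply hdim hne,
    gramSchmidtNormed, inner_smul_left, real_inner_self_eq_norm_sq]
  simp only [RCLike.ofReal_real_eq_id, id_eq, conj_trivial]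
  rw [pow_two, inv_mul_cancel_left₀ hpos.ne', abs_of_pos hpos]
  exact hnorm

theorem EuclideanSpace.volume_sum_abs_le_one (ι : Type*) [Fintype ι] [Nonempty ι] :
    volume {x : EuclideanSpace ℝ ι | ∑ i, |x i| ≤ 1} =
      ENNReal.ofReal (2 ^ Fintype.card ι / (Fintype.card ι).factorial) := by
  have h := volume_sum_rpow_le ι (le_refl (1 : ℝ)) 1
  simp only [Real.rpow_one, ne_eq, one_ne_zero, not_false_eq_true, div_self, div_one,
    ENNReal.ofReal_one, one_pow, one_mul, Real.Gamma_nat_eq_factorial] at h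
  rw [show (1 : ℝ) + 1 = 2 by norm_num, Real.Gamma_two, mul_one] at h
  rw [← h]
  exact (EuclideanSpace.volume_preserving_symm_measurableEquiv_toLp ι).measure_preimage_equiv
    {x : ι → ℝ | ∑ i, |x i| ≤ 1}

theorem EuclideanSpace.le_volume_crossPolytope {n : ℕ} (hn : 1 ≤ n)
    (v : Fin n → EuclideanSpace ℝ (Fin n)) {ρ : ℝ} (hρ : 0 < ρ)
    (hv : ∀ i, ∀ w ∈ Submodule.span ℝ (v '' Set.Iio i), ρ ≤ ‖v i - w‖) :
    ENNReal.ofReal (ρ ^ n * (2 ^ n / n.factorial)) ≤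
      volume {y | ∃ c : Fin n → ℝ, ∑ i, |c i| ≤ 1 ∧ y = ∑ i, c i • v i} := by
  have : Nonempty (Fin n) := ⟨⟨0, hn⟩⟩
  have hdim : Module.finrank ℝ (EuclideanSpace ℝ (Fin n)) = Fintype.card (Fin n) :=
    finrank_euclideanSpace
  set e := InnerProductSpace.gramSchmidtOrthonormalBasis hdim v with he
  set M := e.toBasis.constr ℝ v with hM
  have hdet : ρ ^ n ≤ |LinearMap.det M| := by
    have h₁ := e.toBasis.det_comp M e.toBasis
    rw [e.toBasis.det_self, mul_one] at h₁
    have h₂ : M ∘ e.toBasis = v := by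
      ext1 i
      simp only [hM, Function.comp_apply, Module.Basis.constr_basis]
    rw [← h₁, h₂, he, InnerProductSpace.gramSchmidtOrthonormalBasis_det, Finset.abs_prod]
    calc ρ ^ n = ∏ _i : Fin n, ρ := by simp
      _ ≤ _ := Finset.prod_le_prod (fun _ _ => hρ.le) fun i _ =>
        InnerProductSpace.le_abs_inner_gramSchmidtOrthonormalBasis hdim v hρ i (hv i)
  have hvol : volume (e.repr ⁻¹' {x : EuclideanSpace ℝ (Fin n) | ∑ i, |x i| ≤ 1}) =
      ENNReal.ofReal (2 ^ n / n.factorial) := by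
    have := EuclideanSpace.volume_sum_abs_le_one (Fin n)
    rw [Fintype.card_fin] at this
    rw [← this]
    refine e.measurePreserving_repr.measure_preimage (IsClosed.measurableSet ?_).nullMeasurableSet
    exact isClosed_le (by fun_prop) continuous_const
  rw [ENNReal.ofReal_mul (by positivity), ← hvol]
  calc _ ≤ ENNReal.ofReal |LinearMap.det M| *
        volume (e.repr ⁻¹' {x : EuclideanSpace ℝ (Fin n) | ∑ i, |x i| ≤ 1}) := by gcongr
    _ = volume (M '' (e.repr ⁻¹' {x : EuclideanSpace ℝ (Fin n) | ∑ i, |x i| ≤ 1})) :=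
        (Measure.addHaar_image_linearMap _ M _).symm
    _ ≤ _ := by
      refine measure_mono ?_
      rintro _ ⟨x, hx, rfl⟩
      refine ⟨e.repr x, hx, ?_⟩
      simp [hM, Module.Basis.constr_apply_fintype]

theorem EuclideanSpace.volume_closedBall_eq_unitBallVol {n : ℕ} (hn : 1 ≤ n)
    (x : EuclideanSpace ℝ (Fin n)) {r : ℝ} (hr : 0 ≤ r) :
    volume (Metric.closedBall x r) = ENNReal.ofReal (r ^ n * unitBallVol n) := by
  have : Nonempty (Fin n) := ⟨⟨0, hn⟩⟩
  rw [EuclideanSpace.volume_closedBall, Fintype.card_fin, ENNReal.ofReal_mul (by positivity),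
    ENNReal.ofReal_pow hr, unitBallVol, Real.sqrt_eq_rpow, ← Real.rpow_natCast,
    ← Real.rpow_mul Real.pi_pos.le]
  ring_nf

theorem unitBallVol_pos (n : ℕ) : 0 < unitBallVol n :=
  div_pos (Real.rpow_pos_of_pos Real.pi_pos _) (Real.Gamma_pos_of_pos (by positivity))

section Greedy

variable {X : Type*} [NormedAddCommGroup X] [NormedSpace ℝ X]

theorem spanFirst_eq_span_range (f : ℕ → X) (n : ℕ) :
    spanFirst f n = Submodule.span ℝ (Set.range fun i : Fin n => f i) := by
  rw [spanFirst]
  congr 1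
  ext x
  constructor
  · rintro ⟨i, hi, rfl⟩
    exact ⟨⟨i, hi⟩, rfl⟩
  · rintro ⟨i, rfl⟩
    exact ⟨i, i.2, rfl⟩

theorem spanFirst_mono (f : ℕ → X) : Monotone (spanFirst f) := fun _ _ hmn =>
  Submodule.span_mono (Set.image_mono fun _ hi => lt_of_lt_of_le hi hmn)

theorem linearIndependent_of_forall_notMem_spanFirst {f : ℕ → X} {n : ℕ}
    (h : ∀ k < n, f k ∉ spanFirst f k) : LinearIndependent ℝ fun i : Fin n => f i := by
  induction n with
  | zero => exact linearIndependent_empty_type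
  | succ n ih =>
    rw [linearIndependent_finSucc']
    refine ⟨ih fun k hk => h k (hk.trans n.lt_succ_self), ?_⟩
    have := h n n.lt_succ_self
    rwa [spanFirst_eq_span_range] at this

theorem sum_smul_mem_symConvexHull {K : Set X} {m : ℕ} {c : Fin m → ℝ} {g : Fin m → X}
    (hg : ∀ i, g i ∈ K) (hc : ∑ i, |c i| ≤ 1) : ∑ i, c i • g i ∈ symConvexHull K :=
  subset_closure ⟨m, c, g, hg, hc, rfl⟩

theorem exists_symConvexHull_subset_closedBall {K : Set X} (hK : Bornology.IsBounded K) :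
    ∃ R : ℝ, 0 < R ∧ symConvexHull K ⊆ Metric.closedBall 0 R := by
  obtain ⟨R, hR, hKR⟩ := hK.exists_pos_norm_le
  refine ⟨R, hR, closure_minimal ?_ Metric.isClosed_closedBall⟩
  rintro _ ⟨m, c, g, hg, hc, rfl⟩
  rw [mem_closedBall_zero_iff]
  calc ‖∑ i, c i • g i‖ ≤ ∑ i, ‖c i • g i‖ := norm_sum_le _ _
    _ ≤ ∑ i, |c i| * R := Finset.sum_le_sum fun i _ => by
        rw [norm_smul, Real.norm_eq_abs]
        exact mul_le_mul_of_nonneg_left (hKR _ (hg i)) (abs_nonneg _)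
    _ = (∑ i, |c i|) * R := (Finset.sum_mul ..).symm
    _ ≤ R := mul_le_of_le_one_left hR.le hc

/-- Volume comparison: if `2 ^ n` balls of radius `ε` cover the symmetric convex hull of `K`, then
`ε` controls the smallest of the distances of `f k ∈ K` to the span of its predecessors. -/
theorem le_of_symConvexHull_subset_iUnion_closedBall {K : Set X} {f : ℕ → X} (hfK : ∀ k, f k ∈ K)
    {n : ℕ} (hn : 1 ≤ n) {d ε : ℝ} (hd : 0 < d) (hε : 0 < ε)
    (hdist : ∀ k < n, d ≤ Metric.infDist (f k) (spanFirst f k : Set X))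
    {c : Fin (2 ^ n) → X} (hc : symConvexHull K ⊆ ⋃ i, Metric.closedBall (c i) ε)
    (T : spanFirst f n ≃L[ℝ] EuclideanSpace ℝ (Fin n)) :
    d ≤ ‖(T : spanFirst f n →L[ℝ] EuclideanSpace ℝ (Fin n))‖ *
      ‖(T.symm : EuclideanSpace ℝ (Fin n) →L[ℝ] spanFirst f n)‖ *
        ((n.factorial : ℝ) * unitBallVol n) ^ ((n : ℝ)⁻¹) * ε := by
  set a := ‖(T : spanFirst f n →L[ℝ] EuclideanSpace ℝ (Fin n))‖
  set b := ‖(T.symm : EuclideanSpace ℝ (Fin n) →L[ℝ] spanFirst f n)‖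
  have hmem : ∀ i : Fin n, f i ∈ spanFirst f n := fun i => Submodule.subset_span ⟨i, i.2, rfl⟩
  set v : Fin n → EuclideanSpace ℝ (Fin n) := fun i => T ⟨f i, hmem i⟩ with hv
  have hdv : ∀ i, ∀ w ∈ Submodule.span ℝ (v '' Set.Iio i), d ≤ b * ‖v i - w‖ := by
    intro i w hw
    have hTw : ((T.symm w : spanFirst f n) : X) ∈ spanFirst f i := by
      induction hw using Submodule.span_induction with
      | mem x hx =>
        obtain ⟨j, hj, rfl⟩ := hx
        simp only [hv, ContinuousLinearEquiv.symm_apply_apply]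
        exact Submodule.subset_span ⟨j, hj, rfl⟩
      | zero => simp
      | add x y _ _ hx hy =>
        rw [map_add]
        exact Submodule.add_mem _ hx hy
      | smul r x _ hx =>
        rw [map_smul]
        exact Submodule.smul_mem _ r hx
    calc d ≤ Metric.infDist (f i) (spanFirst f i : Set X) := hdist i i.2
      _ ≤ dist (f i) (T.symm w : spanFirst f n) := Metric.infDist_le_dist_of_mem hTw
      _ = ‖(T.symm : EuclideanSpace ℝ (Fin n) →L[ℝ] spanFirst f n) (v i - w)‖ := by
        rw [dist_eq_norm, map_sub]
        simp [hv]
      _ ≤ b * ‖v i - w‖ := ContinuousLinearMap.le_opNorm _ _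
  have hbpos : 0 < b := by
    have := hdv ⟨0, hn⟩ 0 (Submodule.zero_mem _)
    exact pos_of_mul_pos_left (hd.trans_le this) (norm_nonneg _)
  have hapos : 0 ≤ a := ContinuousLinearMap.opNorm_nonneg _
  have hlower := EuclideanSpace.le_volume_crossPolytope hn v (div_pos hd hbpos) fun i w hw => by
    rw [div_le_iff₀' hbpos]
    exact hdv i w hw
  have hcover : {y | ∃ c : Fin n → ℝ, ∑ i, |c i| ≤ 1 ∧ y = ∑ i, c i • v i} ⊆
      ⋃ j, (fun y => ((T.symm y : spanFirst f n) : X)) ⁻¹' Metric.closedBall (c j) ε := by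
    rintro _ ⟨t, ht, rfl⟩
    have h := hc (sum_smul_mem_symConvexHull (fun i : Fin n => hfK i) ht)
    rw [← Set.preimage_iUnion, Set.mem_preimage]
    convert h
    simp [hv, map_sum]
  have hpiece : ∀ j,
      volume ((fun y => ((T.symm y : spanFirst f n) : X)) ⁻¹' Metric.closedBall (c j) ε) ≤
        ENNReal.ofReal ((a * ε) ^ n * unitBallVol n) := by
    intro j
    rw [← EuclideanSpace.volume_closedBall_eq_unitBallVol hn 0 (by positivity)]
    refine EuclideanSpace.volume_le_volume_closedBall_of_dist_le
      (Metric.isClosed_closedBall.preimage (by fun_prop)).measurableSet (by positivity) ?_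
    intro x hx y hy
    have hxy : ‖T.symm x - T.symm y‖ ≤ 2 * ε := by
      have := dist_triangle_right ((T.symm x : spanFirst f n) : X) (T.symm y : spanFirst f n) (c j)
      have hx' : dist ((T.symm x : spanFirst f n) : X) (c j) ≤ ε := hx
      have hy' : dist ((T.symm y : spanFirst f n) : X) (c j) ≤ ε := hy
      rw [dist_eq_norm, ← Submodule.coe_sub, ← Submodule.coe_norm] at this
      linarith
    have := (T : spanFirst f n →L[ℝ] EuclideanSpace ℝ (Fin n)).le_opNorm (T.symm x - T.symm y)
    rw [map_sub] at this
    simp only [ContinuousLinearEquiv.coe_coe, ContinuousLinearEquiv.apply_symm_apply] at this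
    rw [dist_eq_norm]
    calc ‖x - y‖ ≤ a * ‖T.symm x - T.symm y‖ := this
      _ ≤ a * (2 * ε) := by gcongr
      _ = 2 * (a * ε) := by ring
  have hV := unitBallVol_pos n
  have hvol : ENNReal.ofReal ((d / b) ^ n * (2 ^ n / n.factorial)) ≤
      ENNReal.ofReal (2 ^ n * ((a * ε) ^ n * unitBallVol n)) := by
    calc _ ≤ _ := hlower
      _ ≤ _ := measure_mono hcover
      _ ≤ ∑ j, _ := measure_iUnion_fintype_le _ _
      _ ≤ ∑ _j : Fin (2 ^ n), ENNReal.ofReal ((a * ε) ^ n * unitBallVol n) :=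
        Finset.sum_le_sum fun j _ => hpiece j
      _ = _ := by
        rw [Finset.sum_const, Finset.card_univ, Fintype.card_fin, nsmul_eq_mul,
          ENNReal.ofReal_mul (p := 2 ^ n) (by positivity), ENNReal.ofReal_pow zero_le_two]
        simp
  rw [ENNReal.ofReal_le_ofReal_iff (by positivity)] at hvol
  have hn0 : n ≠ 0 := by lia
  refine le_of_pow_le_pow_left₀ hn0 (by positivity) ?_
  rw [mul_pow, mul_pow, mul_pow, Real.rpow_inv_natCast_pow (by positivity) hn0]
  rw [div_pow, mul_pow] at hvol
  have h2 : (0 : ℝ) < 2 ^ n := by positivity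
  rw [div_mul_div_comm, div_le_iff₀ (by positivity)] at hvol
  refine le_of_mul_le_mul_right (hvol.trans_eq ?_) h2
  ring

end Greedy

/-- entropy-based bound for the weak greedy algorithm in a Banach space, in
terms of the Banach–Mazur-type constant `δ`. -/
theorem weakGreedy_error_le_entropy_banach
    {X : Type*} [NormedAddCommGroup X] [NormedSpace ℝ X] [CompleteSpace X]
    (K : Set X) (hK : IsCompact K) (γ : ℝ) (hγ : γ ∈ Set.Ioc (0 : ℝ) 1)
    (n : ℕ) (hn : 1 ≤ n) (δ : ℝ) (hδ : 1 ≤ δ)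
    (hBM : ∀ Y : Submodule ℝ X, FiniteDimensional ℝ Y → Module.finrank ℝ Y = n →
      ∃ T : Y ≃L[ℝ] EuclideanSpace ℝ (Fin n),
        ‖(T : Y →L[ℝ] EuclideanSpace ℝ (Fin n))‖ *
          ‖(T.symm : EuclideanSpace ℝ (Fin n) →L[ℝ] Y)‖ ≤ δ)
    (f : ℕ → X) (hf : IsWeakGreedy γ K f) :
    greedyError K f n
      ≤ γ⁻¹ * δ * ((n.factorial : ℝ) * unitBallVol n) ^ ((n : ℝ)⁻¹) *
          entropyNumber n (symConvexHull K) := by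
  have hγ0 : 0 < γ := hγ.1
  have hδ0 : 0 < δ := by linarith
  have hV := unitBallVol_pos n
  set κ := ((n.factorial : ℝ) * unitBallVol n) ^ ((n : ℝ)⁻¹)
  have hκ0 : 0 < κ := by positivity
  have hentropy : 0 ≤ entropyNumber n (symConvexHull K) := Real.sInf_nonneg fun ε hε => hε.1.le
  refine csSup_le ⟨_, f 0, (hf 0).1, rfl⟩ ?_
  rintro _ ⟨g, hg, rfl⟩
  simp only
  rcases (Metric.infDist_nonneg (x := g) (s := (spanFirst f n : Set X))).eq_or_lt with h0 | hpos
  · rw [← h0]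
    positivity
  set d := γ * Metric.infDist g (spanFirst f n : Set X) with hd
  have hd0 : 0 < d := by positivity
  have hdist : ∀ k < n, d ≤ Metric.infDist (f k) (spanFirst f k : Set X) := fun k hk =>
    (mul_le_mul_of_nonneg_left (Metric.infDist_le_infDist_of_subset (spanFirst_mono f hk.le)
      ⟨0, Submodule.zero_mem _⟩) hγ0.le).trans ((hf k).2 g hg)
  have hli : LinearIndependent ℝ fun i : Fin n => f i :=
    linearIndependent_of_forall_notMem_spanFirst fun k hk hmem => by
      have := hdist k hk
      rw [Metric.infDist_zero_of_mem hmem] at this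
      linarith
  have hfin : FiniteDimensional ℝ (spanFirst f n) := by
    rw [spanFirst_eq_span_range]
    exact FiniteDimensional.span_of_finite ℝ (Set.finite_range _)
  have hrank : Module.finrank ℝ (spanFirst f n) = n := by
    rw [spanFirst_eq_span_range, finrank_span_eq_card hli, Fintype.card_fin]
  obtain ⟨T, hT⟩ := hBM _ hfin hrank
  have hle : d / (δ * κ) ≤ entropyNumber n (symConvexHull K) := by
    obtain ⟨R, hR, hKR⟩ := exists_symConvexHull_subset_closedBall hK.isBounded
    refine le_csInf ⟨R, hR, fun _ => 0, hKR.trans (Set.subset_iUnion_of_subset 0 subset_rfl)⟩ ?_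
    rintro ε ⟨hε, c, hc⟩
    rw [div_le_iff₀' (by positivity)]
    refine (le_of_symConvexHull_subset_iUnion_closedBall (fun k => (hf k).1) hn hd0 hε hdist hc
      T).trans ?_
    gcongr
  rw [div_le_iff₀' (by positivity), hd] at hle
  rw [mul_assoc, mul_assoc, ← mul_assoc δ, ← div_eq_inv_mul, le_div_iff₀' hγ0]
  exact hle
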